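/- Let k be a commutative ring, G a finite group, and A a k-algebra on which G acts by k-algebra automorphisms. Then the following are equivalent: (1) the map can' : A ⊗_k A → (G → A), can'(a ⊗ b)(σ) = a·σ(b), is bijective and A is faithfully flat as a k-module; (2) the map j : (G → A) → End_k(A), j(u)(b) = Σ_{σ ∈ G} σ(b)·u(σ), is bijective and A is finitely generated, faithful and projective as a k-module. -/

import Mathlib

open TensorProduct

universe u

section Galois

variable (k A G : Type u) [CommRing k] [Ring A] [Algebra k A]
  [Group G] [Fintype G] [MulSemiringAction G A] [SMulCommClass G k A]

/-- The canonical map `can' : A ⊗_k A → (G → A)`, `can'(a ⊗ b)(σ) = a σ(b)`. -/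
noncomputable def canGal : A ⊗[k] A →ₗ[k] (G → A) :=
  TensorProduct.lift (LinearMap.mk₂ k (fun a b σ => a * σ • b)
    (fun a a' b => by funext σ; simp [add_mul])
    (fun r a b => by funext σ; simp [smul_mul_assoc])
    (fun a b b' => by funext σ; simp [smul_add, mul_add])
    (fun r a b => by
      funext σ
      simp only [Pi.smul_apply]
      rw [smul_comm σ r b, mul_smul_comm]))

/-- The map `j : (G → A) → End_k(A)`, `j(u)(b) = Σ_σ σ(b) u(σ)`. -/
noncomputable def jGal (u : G → A) : A →ₗ[k] A where
  toFun b := ∑ σ : G, σ • b * u σ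
  map_add' b b' := by simp [smul_add, add_mul, Finset.sum_add_distrib]
  map_smul' r b := by
    simp only [RingHom.id_apply, Finset.smul_sum]
    refine Finset.sum_congr rfl fun σ _ => ?_
    rw [smul_comm σ r b, smul_mul_assoc]

end Galois

/-!
Both conditions amount to `A` having a `k`-dual basis of a special shape: elements `xᵢ`, `yᵢ` with
`∑ᵢ xᵢ σ(yᵢ) = δ_{σ,1}`, such that each `b ↦ ∑_σ σ(b xᵢ)` takes values in `k`, giving the functional
dual to `yᵢ`. Such data invert both maps explicitly: the inverse of `can'` is
`v ↦ ∑_{σ,i} v(σ) σ(xᵢ) ⊗ yᵢ`, and that of `j` is `φ ↦ (σ ↦ ∑ᵢ σ(xᵢ) φ(yᵢ))`.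

If `can'` is bijective, `∑ᵢ xᵢ ⊗ yᵢ` is the preimage of `δ_{-,1}`. As the trace `tr b = ∑_σ σ(b)` is
`G`-invariant, `can'` does not distinguish `tr b ⊗ 1` from `1 ⊗ tr b`, and `tr b` lies in `k` by
faithfully flat descent. If `j` is bijective, any functional `fᵢ` of a dual basis is `j(uᵢ)` for
some `uᵢ`; as `fᵢ` has invariant values, `uᵢ` is equivariant, that is `uᵢ(σ) = σ(xᵢ)` with
`xᵢ = uᵢ(1)`.
-/

section DualBasis

variable {R M : Type*} [Semiring R] [AddCommMonoid M] [Module R M]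

lemma exists_sum_dual_smul_eq [Module.Finite R M] [Module.Projective R M] :
    ∃ (n : ℕ) (f : Fin n → M →ₗ[R] R) (e : Fin n → M), ∀ m, ∑ i, f i m • e i = m := by
  obtain ⟨n, p, s, -, -, hps⟩ := Module.Finite.exists_comp_eq_id_of_projective R M
  refine ⟨n, fun i => LinearMap.proj i ∘ₗ s, fun i => p (Pi.single i 1), fun m => ?_⟩
  calc ∑ i, s m i • p (Pi.single i 1) = p (s m) := by
        simp only [← map_smul, ← map_sum, ← pi_eq_sum_univ']
    _ = m := LinearMap.congr_fun hps m

variable {ι : Type*} [Fintype ι] {f : ι → M →ₗ[R] R} {e : ι → M}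

lemma finite_of_sum_dual_smul_eq (h : ∀ m, ∑ i, f i m • e i = m) : Module.Finite R M :=
  .of_surjective (Fintype.linearCombination R e) fun m => ⟨fun i => f i m, h m⟩

lemma projective_of_sum_dual_smul_eq (h : ∀ m, ∑ i, f i m • e i = m) : Module.Projective R M :=
  .of_split (LinearMap.pi f) (Fintype.linearCombination R e) (LinearMap.ext h)

end DualBasis

section FaithfullyFlat

variable {R : Type*} [CommRing R]

lemma faithfullyFlat_of_finite_of_faithfulSMul {M : Type*} [AddCommGroup M] [Module R M]
    [Module.Flat R M] [Module.Finite R M] [FaithfulSMul R M] : Module.FaithfullyFlat R M where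
  submodule_ne_top m hm htop := by
    obtain ⟨r, hr, hr0⟩ := Submodule.exists_sub_one_mem_and_smul_eq_zero_of_fg_of_le_smul m
      (⊤ : Submodule R M) Module.Finite.fg_top htop.ge
    have r_eq_zero : r = 0 := FaithfulSMul.eq_of_smul_eq_smul (α := M) fun a => by
      rw [hr0 a trivial, zero_smul]
    exact hm.ne_top <| (Ideal.eq_top_iff_one m).2 <| by simpa [r_eq_zero] using hr

variable (R) in
lemma faithfulSMul_of_faithfullyFlat (M : Type*) [AddCommGroup M] [Module R M]
    [Module.FaithfullyFlat R M] : FaithfulSMul R M where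
  eq_of_smul_eq_smul {r s} hrs := by
    have lTensor_eq_zero : ((r - s) • LinearMap.id : R →ₗ[R] R).lTensor M = 0 := by
      ext m
      simp [LinearMap.lTensor_smul, smul_tmul', sub_smul, hrs]
    have smul_id_eq_zero := (Module.FaithfullyFlat.zero_iff_lTensor_zero R M _).2 lTensor_eq_zero
    simpa [sub_eq_zero] using LinearMap.congr_fun smul_id_eq_zero 1

-- Noncommutative analogue of `Algebra.IsEffective.of_faithfullyFlat`: apply `A ⊗ -` to `A → A/R·1`.
lemma mem_range_algebraMap_of_tmul_one_eq {A : Type*} [Ring A] [Algebra R A]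
    [Module.FaithfullyFlat R A] {a : A} (ha : a ⊗ₜ[R] (1 : A) = 1 ⊗ₜ a) :
    a ∈ LinearMap.range (Algebra.linearMap R A) := by
  set N := LinearMap.range (Algebra.linearMap R A)
  have mkQ_one : N.mkQ 1 = 0 := (Submodule.Quotient.mk_eq_zero N).2 ⟨1, map_one (algebraMap R A)⟩
  have one_tmul_mkQ : (1 : A) ⊗ₜ[R] N.mkQ a = 0 := by
    simpa [mkQ_one] using (congrArg (N.mkQ.lTensor A) ha).symm
  exact (Submodule.Quotient.mk_eq_zero N).1 <|
    (Module.FaithfullyFlat.one_tmul_eq_zero_iff R _ _).1 one_tmul_mkQ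

end FaithfullyFlat

lemma smul_sum_univ_smul {G M : Type*} [Group G] [Fintype G] [AddCommMonoid M]
    [DistribMulAction G M] (τ : G) (m : M) : τ • ∑ σ : G, σ • m = ∑ σ : G, σ • m := by
  simp only [Finset.smul_sum, smul_smul]
  exact Fintype.sum_equiv (Equiv.mulLeft τ) _ _ fun σ => rfl

/-- Galois coordinates `x`, `y` for the action of `G` on `A`, together with functionals `f i` whose
values are the traces `∑ σ, σ • (b * x i)`, regarded as elements of `k`. The name reflects that `y`
and `f` are then dual bases of `A` over `k`, see `IsGaloisDualBasis.sum_smul_eq`. -/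
structure IsGaloisDualBasis (k G : Type*) {A ι : Type*} [CommSemiring k] [Semiring A] [Algebra k A]
    [Group G] [Fintype G] [DecidableEq G] [MulSemiringAction G A] [Fintype ι]
    (x y : ι → A) (f : ι → Module.Dual k A) : Prop where
  sum_mul_smul (σ : G) : ∑ i, x i * σ • y i = if σ = 1 then 1 else 0
  algebraMap_apply (i : ι) (b : A) : algebraMap k A (f i b) = ∑ σ : G, σ • (b * x i)

namespace IsGaloisDualBasis

variable {k A G ι : Type*} [CommSemiring k] [Semiring A] [Algebra k A]
  [Group G] [Fintype G] [DecidableEq G] [MulSemiringAction G A] [Fintype ι]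
  {x y : ι → A} {f : ι → Module.Dual k A}

lemma sum_smul_mul_smul (h : IsGaloisDualBasis k G x y f) (τ σ : G) :
    ∑ i, τ • x i * σ • y i = if σ = τ then 1 else 0 := by
  calc ∑ i, τ • x i * σ • y i = τ • ∑ i, x i * (τ⁻¹ * σ) • y i := by
        simp only [Finset.smul_sum, smul_mul', smul_smul, mul_inv_cancel_left]
    _ = if σ = τ then 1 else 0 := by
        simp only [h.sum_mul_smul, smul_ite, smul_one, smul_zero, inv_mul_eq_one, eq_comm]

lemma smul_eq_sum_mul (h : IsGaloisDualBasis k G x y f) (i : ι) (b a : A) :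
    f i b • a = ∑ σ : G, σ • b * (σ • x i * a) := by
  simp only [Algebra.smul_def, h.algebraMap_apply, smul_mul', Finset.sum_mul, mul_assoc]

lemma sum_smul_eq (h : IsGaloisDualBasis k G x y f) (b : A) : ∑ i, f i b • y i = b := by
  calc ∑ i, f i b • y i = ∑ σ : G, σ • b * ∑ i, σ • x i * (1 : G) • y i := by
        simp only [h.smul_eq_sum_mul, Finset.mul_sum, one_smul]
        exact Finset.sum_comm
    _ = b := by
        simp_rw [h.sum_smul_mul_smul]
        simp

lemma finite (h : IsGaloisDualBasis k G x y f) : Module.Finite k A :=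
  finite_of_sum_dual_smul_eq h.sum_smul_eq

lemma projective (h : IsGaloisDualBasis k G x y f) : Module.Projective k A :=
  projective_of_sum_dual_smul_eq h.sum_smul_eq

end IsGaloisDualBasis

section Bijectivity

variable {k A G : Type u} [CommRing k] [Ring A] [Algebra k A]
  [Group G] [MulSemiringAction G A] [SMulCommClass G k A]

lemma canGal_tmul (a b : A) (σ : G) : canGal k A G (a ⊗ₜ b) σ = a * σ • b := by
  simp [canGal]

lemma mem_range_algebraMap_of_forall_smul_eq [Module.FaithfullyFlat k A]
    (hcan : Function.Injective (canGal k A G)) {a : A} (ha : ∀ σ : G, σ • a = a) :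
    a ∈ LinearMap.range (Algebra.linearMap k A) :=
  mem_range_algebraMap_of_tmul_one_eq <| hcan <| funext fun σ => by simp [canGal_tmul, ha]

variable [Fintype G]

lemma jGal_apply (u : G → A) (b : A) : jGal k A G u b = ∑ σ : G, σ • b * u σ := rfl

namespace IsGaloisDualBasis

variable {ι : Type*} [Fintype ι] [DecidableEq G] {x y : ι → A} {f : ι → Module.Dual k A}

lemma sum_canGal_mul_tmul (h : IsGaloisDualBasis k G x y f) (t : A ⊗[k] A) :
    ∑ i, (∑ σ : G, canGal k A G t σ * σ • x i) ⊗ₜ[k] y i = t := by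
  induction t with
  | zero => simp
  | add s t hs ht =>
    simp only [map_add, Pi.add_apply, add_mul, Finset.sum_add_distrib, add_tmul, hs, ht]
  | tmul a b =>
    have trace_eq (i : ι) : ∑ σ : G, canGal k A G (a ⊗ₜ b) σ * σ • x i = f i b • a := by
      rw [← mul_one a, ← mul_smul_comm, h.smul_eq_sum_mul]
      simp only [canGal_tmul, Finset.mul_sum, mul_assoc, mul_one]
    simp only [trace_eq, smul_tmul, ← tmul_sum, h.sum_smul_eq]

lemma canGal_sum_mul_tmul (h : IsGaloisDualBasis k G x y f) (v : G → A) :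
    canGal k A G (∑ i, (∑ σ : G, v σ * σ • x i) ⊗ₜ[k] y i) = v := by
  funext ρ
  calc canGal k A G (∑ i, (∑ σ : G, v σ * σ • x i) ⊗ₜ[k] y i) ρ
      = ∑ σ : G, v σ * ∑ i, σ • x i * ρ • y i := by
        simp only [map_sum, Finset.sum_apply, canGal_tmul, Finset.sum_mul, Finset.mul_sum,
          mul_assoc]
        exact Finset.sum_comm
    _ = v ρ := by simp [h.sum_smul_mul_smul]

lemma canGal_bijective (h : IsGaloisDualBasis k G x y f) : Function.Bijective (canGal k A G) :=
  Function.bijective_iff_has_inverse.2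
    ⟨fun v => ∑ i, (∑ σ : G, v σ * σ • x i) ⊗ₜ[k] y i, h.sum_canGal_mul_tmul,
      h.canGal_sum_mul_tmul⟩

lemma sum_smul_mul_jGal (h : IsGaloisDualBasis k G x y f) (u : G → A) (τ : G) :
    ∑ i, τ • x i * jGal k A G u (y i) = u τ := by
  calc ∑ i, τ • x i * jGal k A G u (y i) = ∑ σ : G, (∑ i, τ • x i * σ • y i) * u σ := by
        simp only [jGal_apply, Finset.mul_sum, Finset.sum_mul, mul_assoc]
        exact Finset.sum_comm
    _ = u τ := by simp [h.sum_smul_mul_smul]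

lemma jGal_sum_smul_mul (h : IsGaloisDualBasis k G x y f) (φ : A →ₗ[k] A) :
    jGal k A G (fun σ => ∑ i, σ • x i * φ (y i)) = φ := by
  ext b
  calc jGal k A G (fun σ => ∑ i, σ • x i * φ (y i)) b = ∑ i, f i b • φ (y i) := by
        simp only [jGal_apply, h.smul_eq_sum_mul, Finset.mul_sum]
        exact Finset.sum_comm
    _ = φ b := by simp only [← map_smul, ← map_sum, h.sum_smul_eq]

lemma jGal_bijective (h : IsGaloisDualBasis k G x y f) :
    Function.Bijective (fun u : G → A => jGal k A G u) :=
  Function.bijective_iff_has_inverse.2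
    ⟨fun φ σ => ∑ i, σ • x i * φ (y i), fun u => funext (h.sum_smul_mul_jGal u),
      h.jGal_sum_smul_mul⟩

end IsGaloisDualBasis

section OfCanGal

variable [Module.FaithfullyFlat k A]

lemma exists_dual_algebraMap_eq_sum_smul (hcan : Function.Injective (canGal k A G)) :
    ∃ T : Module.Dual k A, ∀ b, algebraMap k A (T b) = ∑ σ : G, σ • b := by
  let trace : A →ₗ[k] A := jGal k A G 1
  have trace_apply (b : A) : trace b = ∑ σ : G, σ • b := by simp [trace, jGal_apply]
  have trace_mem (b : A) : trace b ∈ LinearMap.range (Algebra.linearMap k A) := by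
    refine mem_range_algebraMap_of_forall_smul_eq hcan fun τ => ?_
    rw [trace_apply, smul_sum_univ_smul]
  have := faithfulSMul_of_faithfullyFlat k A
  have linearMap_injective : Function.Injective (Algebra.linearMap k A) :=
    FaithfulSMul.algebraMap_injective k A
  exact ⟨trace.codRestrictOfInjective _ linearMap_injective trace_mem, fun b =>
    (trace.codRestrictOfInjective_comp_apply _ linearMap_injective trace_mem b).trans
      (trace_apply b)⟩

lemma exists_isGaloisDualBasis_of_canGal_bijective [DecidableEq G]
    (hcan : Function.Bijective (canGal k A G)) :
    ∃ (n : ℕ) (x y : Fin n → A) (f : Fin n → Module.Dual k A), IsGaloisDualBasis k G x y f := by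
  obtain ⟨t, ht⟩ := hcan.surjective (Pi.single 1 1)
  obtain ⟨n, x, y, rfl⟩ := TensorProduct.exists_sum_tmul_eq t
  obtain ⟨T, hT⟩ := exists_dual_algebraMap_eq_sum_smul hcan.injective
  refine ⟨n, x, y, fun i => T ∘ₗ LinearMap.mulRight k (x i), fun σ => ?_, fun i b => hT _⟩
  simpa [canGal_tmul, Pi.single_apply] using congrFun ht σ

end OfCanGal

lemma smul_jGal (u : G → A) (τ : G) (b : A) :
    τ • jGal k A G u b = jGal k A G (fun σ => τ • u (τ⁻¹ * σ)) b := by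
  simp only [jGal_apply, Finset.smul_sum, smul_mul', smul_smul]
  exact Fintype.sum_equiv (Equiv.mulLeft τ) _ _ fun σ => by simp

lemma apply_eq_smul_apply_one_of_smul_jGal_eq
    (hj : Function.Injective (fun u : G → A => jGal k A G u)) {u : G → A}
    (hu : ∀ (τ : G) (b : A), τ • jGal k A G u b = jGal k A G u b) (σ : G) : u σ = σ • u 1 := by
  have translate_eq : (fun ρ => σ • u (σ⁻¹ * ρ)) = u :=
    hj <| LinearMap.ext fun b => by rw [← smul_jGal, hu]
  simpa using (congrFun translate_eq σ).symm

lemma exists_forall_algebraMap_eq_sum_smul_mul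
    (hj : Function.Bijective (fun u : G → A => jGal k A G u)) (f : Module.Dual k A) :
    ∃ x : A, ∀ b, algebraMap k A (f b) = ∑ σ : G, σ • (b * x) := by
  obtain ⟨u, hu⟩ := hj.surjective (Algebra.linearMap k A ∘ₗ f)
  have jGal_u (b : A) : jGal k A G u b = algebraMap k A (f b) := LinearMap.congr_fun hu b
  have u_eq (σ : G) : u σ = σ • u 1 :=
    apply_eq_smul_apply_one_of_smul_jGal_eq hj.injective
      (fun τ b => by rw [jGal_u, smul_algebraMap]) σ
  refine ⟨u 1, fun b => ?_⟩
  simp only [smul_mul', ← u_eq, ← jGal_u, jGal_apply]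

lemma exists_isGaloisDualBasis_of_jGal_bijective [DecidableEq G] [Module.Finite k A]
    [Module.Projective k A] (hj : Function.Bijective (fun u : G → A => jGal k A G u)) :
    ∃ (n : ℕ) (x y : Fin n → A) (f : Fin n → Module.Dual k A), IsGaloisDualBasis k G x y f := by
  obtain ⟨n, f, y, hfy⟩ := exists_sum_dual_smul_eq (R := k) (M := A)
  choose x hx using fun i => exists_forall_algebraMap_eq_sum_smul_mul hj (f i)
  have sum_smul_mul : (fun σ : G => ∑ i, σ • x i * y i) = Pi.single 1 1 := by
    apply hj.injective
    ext b
    calc ∑ σ : G, σ • b * ∑ i, σ • x i * y i = ∑ i, algebraMap k A (f i b) * y i := by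
          simp only [hx, smul_mul', Finset.mul_sum, Finset.sum_mul, mul_assoc]
          exact Finset.sum_comm
      _ = b := by simp only [← Algebra.smul_def, hfy]
      _ = ∑ σ : G, σ • b * (Pi.single 1 1 : G → A) σ := by simp [Pi.single_apply]
  refine ⟨n, x, y, f, fun σ => ?_, hx⟩
  calc ∑ i, x i * σ • y i = σ • ∑ i, σ⁻¹ • x i * y i := by
        simp only [Finset.smul_sum, smul_mul', smul_inv_smul]
    _ = if σ = 1 then 1 else 0 := by
        simp [congrFun sum_smul_mul σ⁻¹, Pi.single_apply]

end Bijectivity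

/-- For a finite group `G` acting on a `k`-algebra `A` by `k`-algebra automorphisms:
`can'` is bijective and `A` faithfully flat over `k` iff `j : (G → A) → End_k(A)` is
bijective and `A` is a `k`-progenerator. -/
theorem galois_iff_j_bijective
    (k A G : Type u) [CommRing k] [Ring A] [Algebra k A]
    [Group G] [Fintype G] [MulSemiringAction G A] [SMulCommClass G k A] :
    (Function.Bijective (canGal k A G) ∧ Module.FaithfullyFlat k A) ↔
    (Function.Bijective (fun u : G → A => jGal k A G u) ∧
      Module.Finite k A ∧ Module.Projective k A ∧ FaithfulSMul k A) := by
  classical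
  constructor
  · rintro ⟨hcan, _⟩
    obtain ⟨n, x, y, f, h⟩ := exists_isGaloisDualBasis_of_canGal_bijective hcan
    exact ⟨h.jGal_bijective, h.finite, h.projective, faithfulSMul_of_faithfullyFlat k A⟩
  · rintro ⟨hj, _, _, _⟩
    obtain ⟨n, x, y, f, h⟩ := exists_isGaloisDualBasis_of_jGal_bijective hj
    exact ⟨h.canGal_bijective, faithfullyFlat_of_finite_of_faithfulSMul⟩
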